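/- For every positive integer a, R(a,a) = (1/2)^{2a} / (a · B(a,a)), and in particular R(a,a) > 0. -/

import Mathlib

/-- The Beta function `B(a,b) = ∫₀¹ t^(a-1) (1-t)^(b-1) dt`. -/
noncomputable def betaFn (a b : ℝ) : ℝ := ∫ t in (0:ℝ)..1, t ^ (a - 1) * (1 - t) ^ (b - 1)

/-- `I(a,b)`: the probability that a `Beta(a,b)` random variable is `≥ 1/2`. -/
noncomputable def I (a b : ℝ) : ℝ :=
  (1 / betaFn a b) * ∫ t in (1/2 : ℝ)..1, t ^ (a - 1) * (1 - t) ^ (b - 1)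

/-- `h(x) = max (x, 1-x)`. -/
noncomputable def hFn (x : ℝ) : ℝ := max x (1 - x)

/-- Expected stage-wise reward. -/
noncomputable def R (a b : ℝ) : ℝ :=
  a / (a + b) * (hFn (I (a + 1) b) - hFn (I a b)) +
    b / (a + b) * (hFn (I a (b + 1)) - hFn (I a b))

/-- Optimistic knowledge-gradient reward. -/
noncomputable def Rplus (a b : ℝ) : ℝ :=
  max (hFn (I (a + 1) b) - hFn (I a b)) (hFn (I a (b + 1)) - hFn (I a b))

/-- Pessimistic knowledge-gradient reward. -/
noncomputable def Rminus (a b : ℝ) : ℝ :=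
  min (hFn (I (a + 1) b) - hFn (I a b)) (hFn (I a (b + 1)) - hFn (I a b))

/-!
Integrating the derivative of `t ^ a * (1 - t) ^ b` over `[x, 1]` gives
`(a + b) ∫ₓ¹ t ^ a (1 - t) ^ (b - 1) = a ∫ₓ¹ t ^ (a - 1) (1 - t) ^ (b - 1) + x ^ a (1 - x) ^ b`.
Taking `x = 0` and `x = 1/2` and dividing, `I (a + 1) b` exceeds `I a b` by
`(1/2) ^ (a + b) / (a B(a,b))`. The substitution `t ↦ 1 - t` gives `I b a = 1 - I a b`, and
`h` is invariant under `x ↦ 1 - x`; so on the diagonal, where `I a a = 1/2`, both possible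
observations raise `h` by that same increment.
-/

open MeasureTheory Set

/-- The unnormalised density of the Beta distribution on `[0, 1]`, the integrand of `betaFn`
and `I`. Outside `[0, 1]` its values are those of `Real.rpow` at negative bases. -/
noncomputable def betaKernel (a b t : ℝ) : ℝ := t ^ (a - 1) * (1 - t) ^ (b - 1)

section Kernel

variable {a b x : ℝ}

theorem betaKernel_one_sub (a b t : ℝ) : betaKernel a b (1 - t) = betaKernel b a t := by
  rw [betaKernel, betaKernel, sub_sub_cancel, mul_comm]

theorem intervalIntegrable_betaKernel (ha : 0 < a) (hb : 0 < b) :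
    IntervalIntegrable (betaKernel a b) volume 0 1 := by
  have hC := Complex.betaIntegral_convergent (u := a) (v := b) ha hb
  have hre : IntervalIntegrable (fun t : ℝ ↦ ((t : ℂ) ^ ((a : ℂ) - 1) *
      (1 - (t : ℂ)) ^ ((b : ℂ) - 1)).re) volume 0 1 := ⟨hC.1.re, hC.2.re⟩
  refine hre.congr fun t ht ↦ ?_
  rw [uIoc_of_le zero_le_one] at ht
  have ht' : 0 ≤ 1 - t := sub_nonneg.2 ht.2
  have hcast : (t : ℂ) ^ ((a : ℂ) - 1) * (1 - (t : ℂ)) ^ ((b : ℂ) - 1) =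
      (betaKernel a b t : ℂ) := by
    rw [betaKernel]
    push_cast [Complex.ofReal_cpow ht.1.le, Complex.ofReal_cpow ht']
    rfl
  simp only [hcast, Complex.ofReal_re]

theorem intervalIntegrable_betaKernel_right (ha : 0 < a) (hb : 0 < b) (hx : x ∈ Icc 0 1) :
    IntervalIntegrable (betaKernel a b) volume x 1 :=
  (intervalIntegrable_betaKernel ha hb).mono_set <|
    uIcc_subset_uIcc_right (by rwa [uIcc_of_le zero_le_one])

theorem integral_betaKernel_swap (a b x : ℝ) :
    ∫ t in x..1, betaKernel b a t = ∫ t in (0 : ℝ)..(1 - x), betaKernel a b t := by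
  simpa only [betaKernel_one_sub, sub_self] using
    intervalIntegral.integral_comp_sub_left (a := x) (b := 1) (betaKernel a b) 1

theorem hasDerivAt_rpow_mul_one_sub_rpow (a b : ℝ) {t : ℝ} (ht : t ∈ Ioo 0 1) :
    HasDerivAt (fun t : ℝ ↦ t ^ a * (1 - t) ^ b)
      (a * betaKernel a b t - (a + b) * betaKernel (a + 1) b t) t := by
  have ht' : 0 < 1 - t := sub_pos.2 ht.2
  have hleft : HasDerivAt (fun t : ℝ ↦ t ^ a) (a * t ^ (a - 1)) t :=
    Real.hasDerivAt_rpow_const (Or.inl ht.1.ne')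
  have hright : HasDerivAt (fun t : ℝ ↦ (1 - t) ^ b) (-1 * b * (1 - t) ^ (b - 1)) t :=
    ((hasDerivAt_id' t).const_sub 1).rpow_const (Or.inl ht'.ne')
  refine (hleft.mul hright).congr_deriv ?_
  have hta : t ^ a = t ^ (a - 1) * t := by rw [← Real.rpow_add_one ht.1.ne', sub_add_cancel]
  have htb : (1 - t) ^ b = (1 - t) ^ (b - 1) * (1 - t) := by
    rw [← Real.rpow_add_one ht'.ne', sub_add_cancel]
  rw [betaKernel, betaKernel, add_sub_cancel_right, htb, hta]
  ring

theorem integral_betaKernel_add_one_left (ha : 0 < a) (hb : 0 < b) (hx : x ∈ Icc 0 1) :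
    (a + b) * ∫ t in x..1, betaKernel (a + 1) b t =
      a * (∫ t in x..1, betaKernel a b t) + x ^ a * (1 - x) ^ b := by
  have hint := (intervalIntegrable_betaKernel_right ha hb hx).const_mul a
  have hint' := (intervalIntegrable_betaKernel_right (add_pos ha one_pos) hb hx).const_mul (a + b)
  have hcont : ContinuousOn (fun t : ℝ ↦ t ^ a * (1 - t) ^ b) (Icc x 1) :=
    ((Real.continuous_rpow_const ha.le).mul
      ((Real.continuous_rpow_const hb.le).comp (continuous_const.sub continuous_id))).continuousOn
  have hftc := intervalIntegral.integral_eq_sub_of_hasDerivAt_of_le hx.2 hcont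
    (fun t ht ↦ hasDerivAt_rpow_mul_one_sub_rpow a b ⟨hx.1.trans_lt ht.1, ht.2⟩) (hint.sub hint')
  rw [intervalIntegral.integral_sub hint hint', intervalIntegral.integral_const_mul,
    intervalIntegral.integral_const_mul, sub_self, Real.zero_rpow hb.ne'] at hftc
  linarith

end Kernel

section BetaFn

variable {a b : ℝ}

theorem betaFn_eq_integral_betaKernel (a b : ℝ) :
    betaFn a b = ∫ t in (0 : ℝ)..1, betaKernel a b t := rfl

theorem betaFn_pos (ha : 0 < a) (hb : 0 < b) : 0 < betaFn a b :=
  intervalIntegral.intervalIntegral_pos_of_pos_on (intervalIntegrable_betaKernel ha hb)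
    (fun _ ht ↦ mul_pos (Real.rpow_pos_of_pos ht.1 _) (Real.rpow_pos_of_pos (sub_pos.2 ht.2) _))
    one_pos

theorem betaFn_comm (a b : ℝ) : betaFn b a = betaFn a b := by
  simpa only [betaFn_eq_integral_betaKernel, sub_zero] using integral_betaKernel_swap a b 0

theorem betaFn_add_one_left (ha : 0 < a) (hb : 0 < b) :
    (a + b) * betaFn (a + 1) b = a * betaFn a b := by
  simpa only [betaFn_eq_integral_betaKernel, Real.zero_rpow ha.ne', zero_mul, add_zero] using
    integral_betaKernel_add_one_left ha hb (left_mem_Icc.2 zero_le_one)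

end BetaFn

section UpperTail

variable {a b : ℝ}

theorem I_eq_div (a b : ℝ) : I a b = (∫ t in (1 / 2 : ℝ)..1, betaKernel a b t) / betaFn a b :=
  one_div_mul_eq_div _ _

theorem I_swap (ha : 0 < a) (hb : 0 < b) : I b a = 1 - I a b := by
  have hhalf : (1 / 2 : ℝ) ∈ Icc 0 1 := by norm_num
  have hupper := intervalIntegrable_betaKernel_right ha hb hhalf
  have hsplit := intervalIntegral.integral_add_adjacent_intervals
    ((intervalIntegrable_betaKernel ha hb).trans hupper.symm) hupper
  have hreflect := integral_betaKernel_swap a b (1 / 2)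
  rw [sub_half] at hreflect
  rw [I_eq_div, I_eq_div, betaFn_comm, one_sub_div (betaFn_pos ha hb).ne', hreflect,
    betaFn_eq_integral_betaKernel, ← hsplit, add_sub_cancel_right]

theorem I_self (ha : 0 < a) : I a a = 1 / 2 := by
  linarith [I_swap ha ha]

theorem I_add_one_left (ha : 0 < a) (hb : 0 < b) :
    I (a + 1) b = I a b + (1 / 2) ^ (a + b) / (a * betaFn a b) := by
  have htail := integral_betaKernel_add_one_left ha hb (x := 1 / 2) (by norm_num)
  rw [sub_half, ← Real.rpow_add one_half_pos] at htail
  calc I (a + 1) b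
      = ((a + b) * ∫ t in (1 / 2 : ℝ)..1, betaKernel (a + 1) b t) /
          ((a + b) * betaFn (a + 1) b) := by rw [I_eq_div, mul_div_mul_left _ _ (add_pos ha hb).ne']
    _ = (a * (∫ t in (1 / 2 : ℝ)..1, betaKernel a b t) + (1 / 2) ^ (a + b)) /
          (a * betaFn a b) := by rw [htail, betaFn_add_one_left ha hb]
    _ = I a b + (1 / 2) ^ (a + b) / (a * betaFn a b) := by
          rw [add_div, mul_div_mul_left _ _ ha.ne', I_eq_div]

end UpperTail

theorem hFn_one_sub (x : ℝ) : hFn (1 - x) = hFn x := by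
  rw [hFn, hFn, sub_sub_cancel, max_comm]

theorem hFn_of_half_le {x : ℝ} (hx : 1 / 2 ≤ x) : hFn x = x :=
  max_eq_left (by linarith)

theorem R_diag_general (a : ℝ) (ha : 0 < a) :
    R a a = (1 / 2) ^ (2 * a) / (a * betaFn a a) ∧ 0 < R a a := by
  have hpos : 0 < (1 / 2 : ℝ) ^ (2 * a) / (a * betaFn a a) :=
    div_pos (Real.rpow_pos_of_pos one_half_pos _) (mul_pos ha (betaFn_pos ha ha))
  have hI : I (a + 1) a = 1 / 2 + (1 / 2) ^ (2 * a) / (a * betaFn a a) := by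
    rw [I_add_one_left ha ha, I_self ha, two_mul]
  have hR : R a a = (1 / 2) ^ (2 * a) / (a * betaFn a a) :=
    calc R a a = hFn (I (a + 1) a) - hFn (I a a) := by
          rw [R, I_swap (add_pos ha one_pos) ha, hFn_one_sub, ← add_mul, ← add_div,
            div_self (add_pos ha ha).ne', one_mul]
      _ = I (a + 1) a - I a a := by
          rw [hFn_of_half_le (hI.symm ▸ le_add_of_nonneg_right hpos.le),
            hFn_of_half_le (I_self ha).ge]
      _ = (1 / 2) ^ (2 * a) / (a * betaFn a a) := by rw [hI, I_self ha, add_sub_cancel_left]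
  exact ⟨hR, hR ▸ hpos⟩

theorem R_diag (a : ℕ) (ha : 0 < a) :
    R a a = (1 / 2 : ℝ) ^ (2 * a) / (a * betaFn a a) ∧ 0 < R a a := by
  exact_mod_cast R_diag_general a (Nat.cast_pos.2 ha)
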